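/- arXiv:2004.08001 — 2 statements merged into one kernel-verified Lean document; each statement's English description precedes it below -/
import Mathlib

section
/- Let q be a prime power, let k > 1, and let d_1, …, d_k be positive integers. The sumset F_{q^{d_1}} + ⋯ + F_{q^{d_k}} = {α_1 + ⋯ + α_k : α_i ∈ F_{q^{d_i}}}, taken inside the algebraic closure of F_q, contains exactly q^{λ(d_1, …, d_k)} elements, where λ(d_1, …, d_k) = ∑_{i=1}^k d_i + ∑_{j=2}^k (−1)^{j+1} ∑_{1 ≤ i_1 < ⋯ < i_j ≤ k} gcd(d_{i_1}, …, d_{i_j}). -/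
open Polynomial

/-- `λ(d₁, …, d_k) = ∑ dᵢ + ∑_{j=2}^{k} (-1)^{j+1} ∑_{1 ≤ i₁ < ⋯ < i_j ≤ k} gcd(d_{i₁}, …, d_{i_j})`. -/
def lambdaSum {k : ℕ} (d : Fin k → ℕ) : ℤ :=
  (∑ i, (d i : ℤ)) + ∑ j ∈ Finset.Icc 2 k, (-1 : ℤ) ^ (j + 1) *
    ∑ s ∈ Finset.powersetCard j (Finset.univ : Finset (Fin k)), ((s.gcd d : ℕ) : ℤ)

/-!
The field `F_{q^n}` is the kernel of `φ ^ n - 1`, where `φ` is the `F_q`-linear Frobenius map. The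
kernels of the polynomials in `φ` form a distributive lattice of subspaces: if `p = e p'` and
`r = e r'` with `a p' + b r' = 1`, then every `x` in the kernel of `e p' r'` splits as
`b r' x + a p' x`, whose terms lie in the kernels of `p` and `r` and in every invariant subspace
containing `x`. Dimensions of sums of such kernels therefore obey inclusion–exclusion, as
cardinalities of unions of sets do, and the intersection of the `F_{q^{d_i}}` is `F_{q^g}` with `g`
the gcd of the `d_i`.
-/

open Finset Module

section KerAeval

section CommRing

variable {R M : Type*} [CommRing R] [AddCommGroup M] [Module R M] {φ : End R M}

lemma aeval_apply_mem_of_mem_invtSubmodule {B : Submodule R M} (hB : B ∈ φ.invtSubmodule)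
    (p : R[X]) {x : M} (hx : x ∈ B) : aeval φ p x ∈ B :=
  have hmem : AEval.of R M φ x ∈ AEval.mapSubmodule R M φ ⟨B, hB⟩ :=
    (AEval.mem_mapSubmodule_apply R M φ).2 hx
  (AEval.mem_mapSubmodule_apply R M φ).1 (Submodule.smul_mem _ p hmem)

lemma ker_aeval_mem_invtSubmodule (p : R[X]) : (aeval φ p).ker ∈ φ.invtSubmodule := by
  intro x hx
  have hcomm : Commute (aeval φ p) φ := by
    simpa using (Commute.all p X).map (aeval φ)
  rw [Submodule.mem_comap, LinearMap.mem_ker, ← Module.End.mul_apply, hcomm.eq,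
    Module.End.mul_apply, LinearMap.mem_ker.1 hx, map_zero]

lemma ker_aeval_le_of_dvd {p r : R[X]} (h : p ∣ r) : (aeval φ p).ker ≤ (aeval φ r).ker := by
  obtain ⟨c, rfl⟩ := h
  rw [mul_comm, map_mul]
  exact LinearMap.ker_le_ker_comp _ _

lemma inf_ker_aeval_mul_le_of_isCoprime {B : Submodule R M} (hB : B ∈ φ.invtSubmodule)
    (e : R[X]) {p r : R[X]} (hpr : IsCoprime p r) :
    B ⊓ (aeval φ (e * p * r)).ker ≤ B ⊓ (aeval φ (e * p)).ker ⊔ B ⊓ (aeval φ (e * r)).ker := by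
  rintro x ⟨hxB, hx⟩
  obtain ⟨a, b, hab⟩ := hpr
  have mem_ker {u c : R[X]} (h : e * p * r ∣ u * c) : aeval φ c x ∈ (aeval φ u).ker := by
    simpa using ker_aeval_le_of_dvd h hx
  have hsplit : x = aeval φ (b * r) x + aeval φ (a * p) x := by
    rw [← LinearMap.add_apply, ← map_add, add_comm, hab, map_one, Module.End.one_apply]
  rw [hsplit]
  exact Submodule.add_mem_sup
    ⟨aeval_apply_mem_of_mem_invtSubmodule hB _ hxB, mem_ker ⟨b, by ring⟩⟩
    ⟨aeval_apply_mem_of_mem_invtSubmodule hB _ hxB, mem_ker ⟨a, by ring⟩⟩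

end CommRing

variable {K V : Type*} [Field K] [AddCommGroup V] [Module K V] {φ : End K V}

lemma exists_inf_ker_aeval_eq_sup (p r : K[X]) : ∃ l : K[X], ∀ B ∈ φ.invtSubmodule,
    B ⊓ (aeval φ l).ker = B ⊓ (aeval φ p).ker ⊔ B ⊓ (aeval φ r).ker := by
  classical
  let := EuclideanDomain.gcdMonoid K[X]
  obtain ⟨p', r', hp, hr, hunit⟩ := extract_gcd p r
  set e := GCDMonoid.gcd p r
  have hcop : IsCoprime p' r' := (gcd_isUnit_iff p' r').1 hunit
  refine ⟨e * p' * r', fun B hB => le_antisymm ?_ (sup_le ?_ ?_)⟩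
  · simpa only [← hp, ← hr] using inf_ker_aeval_mul_le_of_isCoprime hB e hcop
  · exact inf_le_inf_left B (ker_aeval_le_of_dvd ⟨r', by rw [← hp]⟩)
  · exact inf_le_inf_left B (ker_aeval_le_of_dvd ⟨p', by rw [mul_right_comm, ← hr]⟩)

variable {ι : Type*}

lemma exists_inf_ker_aeval_eq_finset_sup (s : Finset ι) (p : ι → K[X]) :
    ∃ l : K[X], ∀ B ∈ φ.invtSubmodule,
      B ⊓ (aeval φ l).ker = s.sup fun i => B ⊓ (aeval φ (p i)).ker := by
  classical
  induction s using Finset.induction_on with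
  | empty =>
    have hone : (aeval φ (1 : K[X])).ker = ⊥ := by rw [map_one]; exact LinearMap.ker_id
    exact ⟨1, fun B _ => by rw [hone, inf_bot_eq, sup_empty]⟩
  | insert a s _ ih =>
    obtain ⟨l, hl⟩ := ih
    obtain ⟨m, hm⟩ := exists_inf_ker_aeval_eq_sup (φ := φ) (p a) l
    exact ⟨m, fun B hB => by rw [sup_insert, hm B hB, hl B hB]⟩

lemma inf_finset_sup_ker_aeval {B : Submodule K V} (hB : B ∈ φ.invtSubmodule)
    (s : Finset ι) (p : ι → K[X]) :
    B ⊓ (s.sup fun i => (aeval φ (p i)).ker) = s.sup fun i => B ⊓ (aeval φ (p i)).ker := by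
  obtain ⟨l, hl⟩ := exists_inf_ker_aeval_eq_finset_sup (φ := φ) s p
  have hsup : (aeval φ l).ker = s.sup fun i => (aeval φ (p i)).ker := by
    simpa only [top_inf_eq] using hl ⊤ (End.invtSubmodule.top_mem φ)
  rw [← hsup, hl B hB]

theorem sum_powerset_finrank_inf_ker_aeval (s : Finset ι) (p : ι → K[X]) {B : Submodule K V}
    (hB : B ∈ φ.invtSubmodule) [FiniteDimensional K B] :
    ∑ t ∈ s.powerset, (-1 : ℤ) ^ #t *
        finrank K ↥(B ⊓ t.inf fun i => (aeval φ (p i)).ker) =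
      finrank K B - finrank K ↥(B ⊓ s.sup fun i => (aeval φ (p i)).ker) := by
  classical
  set U : ι → Submodule K V := fun i => (aeval φ (p i)).ker
  induction s using Finset.induction_on generalizing B with
  | empty =>
    rw [powerset_empty, sum_singleton, card_empty, pow_zero, one_mul, inf_empty, inf_top_eq,
      sup_empty, inf_bot_eq, finrank_bot, Nat.cast_zero, sub_zero]
  | insert a s ha ih =>
    have hBa : B ⊓ U a ∈ φ.invtSubmodule :=
      φ.invtSubmodule.inf_mem hB (ker_aeval_mem_invtSubmodule (p a))
    have hdistrib : B ⊓ (insert a s).sup U = B ⊓ U a ⊔ B ⊓ s.sup U := by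
      rw [inf_finset_sup_ker_aeval hB, sup_insert, ← inf_finset_sup_ker_aeval hB]
    have hmodular := Submodule.finrank_sup_add_finrank_inf_eq (B ⊓ U a) (B ⊓ s.sup U)
    rw [← hdistrib, ← inf_inf_distrib_left, ← inf_assoc] at hmodular
    have hinsert : ∑ t ∈ s.powerset, (-1 : ℤ) ^ #(insert a t) *
        finrank K ↥(B ⊓ (insert a t).inf U) =
          -∑ t ∈ s.powerset, (-1 : ℤ) ^ #t * finrank K ↥(B ⊓ U a ⊓ t.inf U) := by
      rw [← sum_neg_distrib]
      refine sum_congr rfl fun t ht => ?_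
      rw [card_insert_of_notMem fun h => ha (mem_powerset.1 ht h), inf_insert, ← inf_assoc]
      ring
    rw [sum_powerset_insert ha, hinsert, ih hB, ih hBa]
    linarith

theorem finrank_finset_sup_ker_aeval (s : Finset ι) (p : ι → K[X])
    [∀ i, FiniteDimensional K (aeval φ (p i)).ker] :
    (finrank K ↥(s.sup fun i => (aeval φ (p i)).ker) : ℤ) =
      ∑ t ∈ s.powerset with t.Nonempty, (-1 : ℤ) ^ (#t + 1) *
        finrank K ↥(t.inf fun i => (aeval φ (p i)).ker) := by
  classical
  set U : ι → Submodule K V := fun i => (aeval φ (p i)).ker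
  have hinv : s.sup U ∈ φ.invtSubmodule :=
    sup_induction (End.invtSubmodule.bot_mem φ) (fun _ h _ h' => φ.invtSubmodule.sup_mem h h')
      fun i _ => ker_aeval_mem_invtSubmodule (p i)
  have hsum := sum_powerset_finrank_inf_ker_aeval s p hinv
  rw [inf_idem, sub_self, ← add_sum_erase _ _ (empty_mem_powerset s), inf_empty, inf_top_eq,
    card_empty, pow_zero, one_mul] at hsum
  rw [eq_neg_of_add_eq_zero_left hsum, ← sum_neg_distrib]
  simp only [nonempty_iff_ne_empty, filter_ne']
  refine sum_congr rfl fun t ht => ?_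
  obtain ⟨hne, hts⟩ := mem_erase.1 ht
  obtain ⟨i, hi⟩ := nonempty_iff_ne_empty.2 hne
  have hle : t.inf U ≤ s.sup U := (inf_le hi).trans (le_sup (mem_powerset.1 hts hi))
  rw [inf_eq_right.2 hle]
  ring

end KerAeval

section Periodic

variable {R M : Type*} [CommRing R] [AddCommGroup M] [Module R M] (φ : End R M)

lemma mem_ker_aeval_X_pow_sub_one {n : ℕ} {x : M} :
    x ∈ (aeval φ (X ^ n - 1 : R[X])).ker ↔ Function.IsPeriodicPt φ n x := by
  simp [sub_eq_zero, Module.End.coe_pow, Function.IsPeriodicPt, Function.IsFixedPt]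

lemma finset_inf_ker_aeval_X_pow_sub_one {ι : Type*} (t : Finset ι) (d : ι → ℕ) :
    (t.inf fun i => (aeval φ (X ^ d i - 1 : R[X])).ker) =
      (aeval φ (X ^ t.gcd d - 1 : R[X])).ker := by
  ext x
  simp only [Submodule.mem_finsetInf, mem_ker_aeval_X_pow_sub_one,
    Function.isPeriodicPt_iff_minimalPeriod_dvd, Finset.dvd_gcd_iff]

end Periodic

lemma mem_iSup_iff_exists_sum {R M ι : Type*} [Semiring R] [AddCommMonoid M] [Module R M]
    [Fintype ι] {p : ι → Submodule R M} {x : M} :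
    x ∈ ⨆ i, p i ↔ ∃ a : ι → M, (∀ i, a i ∈ p i) ∧ x = ∑ i, a i := by
  have hsum := Submodule.mem_iSup_finset_iff_exists_sum (s := univ) p x
  simp only [mem_univ, iSup_pos] at hsum
  rw [hsum]
  constructor
  · rintro ⟨a, rfl⟩
    exact ⟨fun i => a i, fun i => (a i).2, rfl⟩
  · rintro ⟨a, ha, rfl⟩
    exact ⟨fun i => ⟨a i, ha i⟩, rfl⟩

section Frobenius

variable (F L : Type*) [Field F] [Fintype F] [Field L] [Algebra F L]

/-- The elements of `L` lying in the field with `q ^ n` elements, where `q` is the order of `F`, as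
an `F`-subspace of `L`. It is encoded as the kernel of `X ^ n - 1` at the Frobenius endomorphism;
for `n = 0` this is all of `L`. -/
noncomputable def frobeniusFixed (n : ℕ) : Submodule F L :=
  (aeval (FiniteField.frobeniusAlgHom F L).toLinearMap (X ^ n - 1 : F[X])).ker

variable {F L}

lemma mem_frobeniusFixed {n : ℕ} {x : L} :
    x ∈ frobeniusFixed F L n ↔ x ^ Fintype.card F ^ n = x := by
  rw [frobeniusFixed, mem_ker_aeval_X_pow_sub_one, Function.IsPeriodicPt, Function.IsFixedPt,
    AlgHom.coe_toLinearMap, FiniteField.coe_frobeniusAlgHom, pow_iterate]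

variable (F L) [IsSepClosed L]

lemma natCard_frobeniusFixed {n : ℕ} (hn : n ≠ 0) :
    Nat.card (frobeniusFixed F L n) = Fintype.card F ^ n := by
  have hne : (X ^ Fintype.card F ^ n - X : F[X]) ≠ 0 :=
    FiniteField.X_pow_card_pow_sub_X_ne_zero F hn Fintype.one_lt_card
  have hsep : (X ^ Fintype.card F ^ n - X : F[X]).Separable :=
    galois_poly_separable (ringChar F) _
      ((ringChar.dvd (FiniteField.cast_card_eq_zero F)).trans (dvd_pow_self _ hn))
  have hroots : (frobeniusFixed F L n : Set L) = (X ^ Fintype.card F ^ n - X : F[X]).rootSet L := by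
    ext x
    simp [mem_frobeniusFixed, mem_rootSet_of_ne hne, sub_eq_zero]
  calc
    Nat.card (frobeniusFixed F L n)
    _ = Nat.card ((X ^ Fintype.card F ^ n - X : F[X]).rootSet L) := by
      rw [← hroots, SetLike.coe_sort_coe]
    _ = (X ^ Fintype.card F ^ n - X : F[X]).natDegree := by
      rw [Nat.card_eq_fintype_card,
        card_rootSet_eq_natDegree hsep (IsSepClosed.splits_codomain _ hsep)]
    _ = Fintype.card F ^ n :=
      FiniteField.X_pow_card_pow_sub_X_natDegree_eq F hn Fintype.one_lt_card

lemma finiteDimensional_frobeniusFixed {n : ℕ} (hn : n ≠ 0) :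
    FiniteDimensional F (frobeniusFixed F L n) := by
  have : Finite (frobeniusFixed F L n) := Nat.finite_of_card_ne_zero <| by
    rw [natCard_frobeniusFixed F L hn]
    exact pow_ne_zero n Fintype.card_ne_zero
  exact Module.Finite.of_finite

lemma finrank_frobeniusFixed {n : ℕ} (hn : n ≠ 0) : finrank F (frobeniusFixed F L n) = n := by
  have := finiteDimensional_frobeniusFixed F L hn
  rw [← Nat.pow_right_inj (Fintype.one_lt_card (α := F)), ← natCard_frobeniusFixed F L hn,
    Module.natCard_eq_pow_finrank (K := F), Nat.card_eq_fintype_card]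

theorem finrank_iSup_frobeniusFixed {ι : Type*} [Fintype ι] {d : ι → ℕ} (hd : ∀ i, 0 < d i) :
    (finrank F ↥(⨆ i, frobeniusFixed F L (d i)) : ℤ) =
      ∑ t : Finset ι with t.Nonempty, (-1 : ℤ) ^ (#t + 1) * (t.gcd d : ℕ) := by
  have (i : ι) := finiteDimensional_frobeniusFixed F L (hd i).ne'
  unfold frobeniusFixed at this ⊢
  rw [← sup_univ_eq_iSup, finrank_finset_sup_ker_aeval, powerset_univ]
  refine sum_congr rfl fun t ht => ?_
  obtain ⟨i, hi⟩ := (mem_filter.1 ht).2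
  have hgcd : t.gcd d ≠ 0 := fun h => (hd i).ne' (Finset.gcd_eq_zero_iff.1 h i hi)
  rw [finset_inf_ker_aeval_X_pow_sub_one, ← frobeniusFixed, finrank_frobeniusFixed F L hgcd]

theorem card_sumset_subfields_general {ι : Type*} [Fintype ι] (d : ι → ℕ) (hd : ∀ i, 0 < d i) :
    (Nat.card {x : L //
        ∃ a : ι → L, (∀ i, a i ^ Fintype.card F ^ d i = a i) ∧ x = ∑ i, a i} : ℚ) =
      (Fintype.card F : ℚ) ^
        ∑ t : Finset ι with t.Nonempty, (-1 : ℤ) ^ (#t + 1) * (t.gcd d : ℕ) := by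
  have (i : ι) := finiteDimensional_frobeniusFixed F L (hd i).ne'
  simp only [← mem_frobeniusFixed, ← mem_iSup_iff_exists_sum]
  rw [Module.natCard_eq_pow_finrank (K := F), ← finrank_iSup_frobeniusFixed F L hd,
    Nat.card_eq_fintype_card, zpow_natCast, Nat.cast_pow]

end Frobenius

lemma lambdaSum_eq_sum_nonempty {k : ℕ} (d : Fin k → ℕ) :
    lambdaSum d = ∑ t : Finset (Fin k) with t.Nonempty, (-1 : ℤ) ^ (#t + 1) * (t.gcd d : ℕ) := by
  have hcard (t : Finset (Fin k)) (ht : t ∈ univ.filter Finset.Nonempty) : #t ∈ Icc 1 k :=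
    mem_Icc.2 ⟨card_pos.2 (mem_filter.1 ht).2, card_finset_fin_le t⟩
  have hlevel {j : ℕ} (hj : j ∈ Icc 1 k) :
      ∑ t ∈ univ.filter Finset.Nonempty with #t = j, (-1 : ℤ) ^ (#t + 1) * (t.gcd d : ℕ) =
        (-1) ^ (j + 1) * ∑ t ∈ powersetCard j (univ : Finset (Fin k)), ((t.gcd d : ℕ) : ℤ) := by
    rw [mul_sum]
    refine sum_congr ?_ fun t ht => by rw [(mem_powersetCard.1 ht).2]
    ext t
    have : #t = j → t.Nonempty := fun h => card_pos.1 (h ▸ (mem_Icc.1 hj).1)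
    simpa [mem_powersetCard] using this
  have hsingle : ∑ t ∈ powersetCard 1 (univ : Finset (Fin k)), ((t.gcd d : ℕ) : ℤ) =
      ∑ i, (d i : ℤ) := by
    simp [powersetCard_one]
  rw [← sum_fiberwise_of_maps_to hcard, sum_congr rfl fun j hj => hlevel hj, lambdaSum]
  rcases k.eq_zero_or_pos with rfl | hk
  · simp
  · rw [← add_sum_Ioc_eq_sum_Icc (a := 1) hk, hsingle, ← Icc_add_one_left_eq_Ioc]
    norm_num

/-- **Corollary 2 (sumset part).** For `k > 1` and positive integers `d₁, …, d_k`, the sumset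
`F_{q^{d₁}} + ⋯ + F_{q^{d_k}}`, taken inside the algebraic closure of `F_q`, contains exactly
`q^{λ(d₁, …, d_k)}` elements. -/
theorem card_sumset_subfields
    (F : Type*) [Field F] [Fintype F]
    (q : ℕ) (hq : q = Fintype.card F)
    {k : ℕ} (hk : 1 < k)
    (d : Fin k → ℕ) (hd : ∀ i, 0 < d i) :
    (Nat.card {x : AlgebraicClosure F //
        ∃ a : Fin k → AlgebraicClosure F,
          (∀ i, a i ^ q ^ (d i) = a i) ∧ x = ∑ i, a i} : ℚ) =
      (q : ℚ) ^ lambdaSum d := by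
  rw [hq, lambdaSum_eq_sum_nonempty]
  exact card_sumset_subfields_general F (AlgebraicClosure F) d hd
end

section
/- Let q be a prime power and let d_1, …, d_k be positive integers. Then the degree of lcm(x^{d_1} − 1, …, x^{d_k} − 1) in F_q[x] equals λ(d_1, …, d_k) = ∑_{i=1}^k d_i + ∑_{j=2}^k (−1)^{j+1} ∑_{1 ≤ i_1 < ⋯ < i_j ≤ k} gcd(d_{i_1}, …, d_{i_j}). -/
open Polynomial

/-!
In a GCD monoid `gcd` distributes over `lcm`, so a degree, being additive on products, satisfies
`deg (gcd a b) + deg (gcd a c) = deg (gcd (gcd a b) c) + deg (gcd a (lcm b c))`, which is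
inclusion–exclusion for two divisors of `a`. Splitting off one polynomial at a time, the alternating
sum of the `deg (gcd a (gcd t))` over all `t ⊆ s` is `deg a - deg (gcd a (lcm s))`; it vanishes for
`a = lcm s`, and its term at `t = ∅` is then `deg (lcm s)`. Finally, `h ∣ x ^ n - 1` holds exactly
when the order of `x` modulo `h` divides `n`, so the gcd of the `x ^ dᵢ - 1` is
`x ^ gcd (dᵢ) - 1`, whose degree is `gcd (dᵢ)`.
-/

section InclusionExclusion

section GCDMonoid

variable {M : Type*} [CommMonoidWithZero M] [GCDMonoid M]

theorem dvd_lcm_gcd_gcd_of_dvd_lcm {a b c : M} (h : a ∣ lcm b c) :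
    a ∣ lcm (gcd a b) (gcd a c) := by
  rcases eq_or_ne (gcd (gcd a b) (gcd a c)) 0 with hg | hg
  · simp [((gcd_eq_zero_iff _ _).1 hg).1]
  have hgb : gcd (gcd a b) (gcd a c) ∣ b := (gcd_dvd_left _ _).trans (gcd_dvd_right _ _)
  have hgc : gcd (gcd a b) (gcd a c) ∣ c := (gcd_dvd_right _ _).trans (gcd_dvd_right _ _)
  have dvd_bc : gcd (gcd a b) (gcd a c) * a ∣ b * c :=
    (mul_dvd_mul (dvd_gcd hgb hgc) h).trans (gcd_mul_lcm b c).dvd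
  have dvd_b_gcd : gcd (gcd a b) (gcd a c) * a ∣ b * gcd a c :=
    (dvd_gcd (mul_dvd_mul_right hgb a) dvd_bc).trans (gcd_mul_left' b a c).dvd
  have dvd_a_gcd : gcd (gcd a b) (gcd a c) * a ∣ a * gcd a c := by
    rw [mul_comm]
    exact mul_dvd_mul_left a (gcd_dvd_right _ _)
  refine (mul_dvd_mul_iff_left hg).1 ?_
  calc gcd (gcd a b) (gcd a c) * a
    _ ∣ gcd (a * gcd a c) (b * gcd a c) := dvd_gcd dvd_a_gcd dvd_b_gcd
    _ ∣ gcd a b * gcd a c := (gcd_mul_right' (gcd a c) a b).dvd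
    _ ∣ gcd (gcd a b) (gcd a c) * lcm (gcd a b) (gcd a c) := (gcd_mul_lcm _ _).symm.dvd

theorem gcd_lcm_associated_lcm_gcd_gcd (a b c : M) :
    Associated (gcd a (lcm b c)) (lcm (gcd a b) (gcd a c)) := by
  refine associated_of_dvd_dvd ?_ ?_
  · calc gcd a (lcm b c)
      _ ∣ lcm (gcd (gcd a (lcm b c)) b) (gcd (gcd a (lcm b c)) c) :=
        dvd_lcm_gcd_gcd_of_dvd_lcm (gcd_dvd_right _ _)
      _ ∣ lcm (gcd a b) (gcd a c) :=
        lcm_dvd_lcm (gcd_dvd_gcd (gcd_dvd_left _ _) dvd_rfl)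
          (gcd_dvd_gcd (gcd_dvd_left _ _) dvd_rfl)
  · exact lcm_dvd (gcd_dvd_gcd dvd_rfl (dvd_lcm_left _ _))
      (gcd_dvd_gcd dvd_rfl (dvd_lcm_right _ _))

theorem gcd_gcd_gcd_associated (a b c : M) :
    Associated (gcd (gcd a b) (gcd a c)) (gcd (gcd a b) c) :=
  associated_of_dvd_dvd (gcd_dvd_gcd dvd_rfl (gcd_dvd_right _ _))
    (dvd_gcd (gcd_dvd_left _ _) (gcd_dvd_gcd (gcd_dvd_left _ _) dvd_rfl))

variable {G : Type*} [AddCommGroup G] {v : M → G}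

theorem map_gcd_add_map_gcd (hmul : ∀ a b, a ≠ 0 → b ≠ 0 → v (a * b) = v a + v b)
    (hassoc : ∀ a b, Associated a b → v a = v b) {a : M} (ha : a ≠ 0) (b c : M) :
    v (gcd a b) + v (gcd a c) = v (gcd (gcd a b) c) + v (gcd a (lcm b c)) := by
  have hgcd (x : M) : gcd a x ≠ 0 := fun h => ha ((gcd_eq_zero_iff _ _).1 h).1
  have hgg : gcd (gcd a b) (gcd a c) ≠ 0 := fun h => hgcd b ((gcd_eq_zero_iff _ _).1 h).1
  have hlcm : lcm (gcd a b) (gcd a c) ≠ 0 := by simp [lcm_eq_zero_iff, hgcd]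
  calc v (gcd a b) + v (gcd a c)
    _ = v (gcd a b * gcd a c) := (hmul _ _ (hgcd b) (hgcd c)).symm
    _ = v (gcd (gcd a b) (gcd a c) * lcm (gcd a b) (gcd a c)) :=
      hassoc _ _ (gcd_mul_lcm _ _).symm
    _ = v (gcd (gcd a b) (gcd a c)) + v (lcm (gcd a b) (gcd a c)) := hmul _ _ hgg hlcm
    _ = v (gcd (gcd a b) c) + v (gcd a (lcm b c)) := by
      rw [hassoc _ _ (gcd_gcd_gcd_associated a b c),
        hassoc _ _ (gcd_lcm_associated_lcm_gcd_gcd a b c)]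

end GCDMonoid

variable {M : Type*} [CommMonoidWithZero M] [NormalizedGCDMonoid M]
  {G : Type*} [AddCommGroup G] {v : M → G} {ι : Type*}

theorem sum_powerset_neg_one_pow_smul_map_gcd
    (hmul : ∀ a b, a ≠ 0 → b ≠ 0 → v (a * b) = v a + v b)
    (hassoc : ∀ a b, Associated a b → v a = v b)
    (f : ι → M) (s : Finset ι) {a : M} (ha : a ≠ 0) :
    ∑ t ∈ s.powerset, (-1 : ℤ) ^ t.card • v (gcd a (t.gcd f)) = v a - v (gcd a (s.lcm f)) := by
  classical
  induction s using Finset.induction_on generalizing a with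
  | empty =>
    have : Nontrivial M := ⟨a, 0, ha⟩
    have map_one : v 1 = 0 := by simpa using hmul 1 1 one_ne_zero one_ne_zero
    simp [hassoc _ _ (normalize_associated a), map_one]
  | insert i s hi ih =>
    have hai : gcd a (f i) ≠ 0 := fun h => ha ((gcd_eq_zero_iff _ _).1 h).1
    have sum_insert :
        ∑ t ∈ s.powerset, (-1 : ℤ) ^ (insert i t).card • v (gcd a ((insert i t).gcd f)) =
          -∑ t ∈ s.powerset, (-1 : ℤ) ^ t.card • v (gcd (gcd a (f i)) (t.gcd f)) := by
      rw [← Finset.sum_neg_distrib]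
      refine Finset.sum_congr rfl fun t ht => ?_
      rw [Finset.card_insert_of_notMem (Finset.notMem_of_mem_powerset_of_notMem ht hi),
        Finset.gcd_insert, gcd_assoc, pow_succ, mul_neg_one, neg_smul]
    have modular := map_gcd_add_map_gcd hmul hassoc ha (f i) (s.lcm f)
    rw [Finset.sum_powerset_insert hi, sum_insert, ih ha, ih hai, Finset.lcm_insert,
      eq_sub_of_add_eq modular]
    abel

theorem map_lcm_eq_sum_powerset_map_gcd
    (hmul : ∀ a b, a ≠ 0 → b ≠ 0 → v (a * b) = v a + v b)
    (hassoc : ∀ a b, Associated a b → v a = v b)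
    {f : ι → M} {s : Finset ι} (hs : s.lcm f ≠ 0) :
    v (s.lcm f) =
      ∑ t ∈ s.powerset with t.Nonempty, (-1 : ℤ) ^ (t.card + 1) • v (t.gcd f) := by
  have gcd_dvd_lcm {t : Finset ι} (ht : t ∈ s.powerset) (hne : t.Nonempty) :
      t.gcd f ∣ s.lcm f := by
    obtain ⟨i, hi⟩ := hne
    exact (Finset.gcd_dvd hi).trans (Finset.dvd_lcm (Finset.mem_powerset.1 ht hi))
  have sum_nonempty :
      ∑ t ∈ s.powerset with t.Nonempty, (-1 : ℤ) ^ t.card • v (gcd (s.lcm f) (t.gcd f)) =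
        -∑ t ∈ s.powerset with t.Nonempty, (-1 : ℤ) ^ (t.card + 1) • v (t.gcd f) := by
    rw [← Finset.sum_neg_distrib]
    refine Finset.sum_congr rfl fun t ht => ?_
    rw [Finset.mem_filter] at ht
    have gcd_associated : Associated (gcd (s.lcm f) (t.gcd f)) (t.gcd f) :=
      associated_of_dvd_dvd (gcd_dvd_right _ _) (dvd_gcd (gcd_dvd_lcm ht.1 ht.2) dvd_rfl)
    rw [hassoc _ _ gcd_associated, pow_succ, mul_neg_one, neg_smul, neg_neg]
  have sum_empty :
      ∑ t ∈ s.powerset with ¬t.Nonempty, (-1 : ℤ) ^ t.card • v (gcd (s.lcm f) (t.gcd f)) =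
        v (s.lcm f) := by
    have filter_eq : {t ∈ s.powerset | ¬t.Nonempty} = {∅} := by
      ext t
      simp +contextual [Finset.not_nonempty_iff_eq_empty]
    simp [filter_eq, hassoc _ _ (normalize_associated _)]
  have sum_eq_zero := sum_powerset_neg_one_pow_smul_map_gcd hmul hassoc f s hs
  rw [← Finset.sum_filter_add_sum_filter_not _ Finset.Nonempty, sum_nonempty, sum_empty,
    gcd_same, Finset.normalize_lcm, sub_self, neg_add_eq_zero] at sum_eq_zero
  exact sum_eq_zero.symm

end InclusionExclusion

section PowSubOne

theorem dvd_pow_sub_one_iff_orderOf_dvd {R : Type*} [CommRing R] (h x : R) (n : ℕ) :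
    h ∣ x ^ n - 1 ↔ orderOf (Ideal.Quotient.mk (Ideal.span {h}) x) ∣ n := by
  rw [orderOf_dvd_iff_pow_eq_one, ← map_pow, ← map_one (Ideal.Quotient.mk _), Ideal.Quotient.eq,
    Ideal.mem_span_singleton]

theorem gcd_pow_sub_one_associated {R ι : Type*} [CommRing R] [NormalizedGCDMonoid R]
    (x : R) (d : ι → ℕ) (s : Finset ι) :
    Associated (s.gcd fun i => x ^ d i - 1) (x ^ s.gcd d - 1) := by
  have dvd_iff (h : R) : h ∣ (s.gcd fun i => x ^ d i - 1) ↔ h ∣ x ^ s.gcd d - 1 := by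
    simp only [Finset.dvd_gcd_iff, dvd_pow_sub_one_iff_orderOf_dvd]
  exact associated_of_dvd_dvd ((dvd_iff _).1 dvd_rfl) ((dvd_iff _).2 dvd_rfl)

end PowSubOne

section Degree

variable {R ι : Type*} [CommRing R] [IsDomain R]

theorem natDegree_eq_of_associated {p q : R[X]} (h : Associated p q) :
    p.natDegree = q.natDegree :=
  natDegree_eq_of_degree_eq (degree_eq_degree_of_associated h)

variable [NormalizedGCDMonoid R[X]]

theorem natDegree_gcd_X_pow_sub_one (d : ι → ℕ) (s : Finset ι) :
    (s.gcd fun i => (X : R[X]) ^ d i - 1).natDegree = s.gcd d := by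
  rw [natDegree_eq_of_associated (gcd_pow_sub_one_associated X d s), ← C_1,
    natDegree_X_pow_sub_C]

theorem natDegree_lcm_eq_sum_powerset_natDegree_gcd {f : ι → R[X]} {s : Finset ι}
    (hf : ∀ i ∈ s, f i ≠ 0) :
    ((s.lcm f).natDegree : ℤ) =
      ∑ t ∈ s.powerset with t.Nonempty, (-1 : ℤ) ^ (t.card + 1) * ((t.gcd f).natDegree : ℤ) :=
  map_lcm_eq_sum_powerset_map_gcd (v := fun p : R[X] => (p.natDegree : ℤ))
    (fun _ _ hp hq => mod_cast natDegree_mul hp hq)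
    (fun _ _ h => mod_cast natDegree_eq_of_associated h)
    (Finset.lcm_ne_zero_iff.2 hf)

end Degree

theorem sum_powerset_nonempty_eq_sum_Icc_powersetCard {ι G : Type*} [AddCommMonoid G]
    (s : Finset ι) (φ : Finset ι → G) :
    ∑ t ∈ s.powerset with t.Nonempty, φ t =
      ∑ j ∈ Finset.Icc 1 s.card, ∑ t ∈ s.powersetCard j, φ t := by
  have card_mem : ∀ t ∈ s.powerset.filter Finset.Nonempty, t.card ∈ Finset.Icc 1 s.card := by
    intro t ht
    rw [Finset.mem_filter, Finset.mem_powerset] at ht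
    exact Finset.mem_Icc.2 ⟨ht.2.card_pos, Finset.card_le_card ht.1⟩
  rw [← Finset.sum_fiberwise_of_maps_to card_mem]
  refine Finset.sum_congr rfl fun j hj => Finset.sum_congr ?_ fun _ _ => rfl
  ext t
  simp only [Finset.mem_filter, Finset.mem_powerset, Finset.mem_powersetCard, Finset.mem_Icc,
    ← Finset.card_pos] at hj ⊢
  lia

theorem lambdaSum_eq_sum_powerset_gcd {k : ℕ} (d : Fin k → ℕ) :
    lambdaSum d = ∑ t ∈ Finset.univ.powerset with t.Nonempty,
      (-1 : ℤ) ^ (t.card + 1) * ((t.gcd d : ℕ) : ℤ) := by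
  have sum_powersetCard (j : ℕ) :
      ∑ t ∈ Finset.univ.powersetCard j, (-1 : ℤ) ^ (t.card + 1) * ((t.gcd d : ℕ) : ℤ) =
        (-1) ^ (j + 1) * ∑ t ∈ Finset.univ.powersetCard j, ((t.gcd d : ℕ) : ℤ) := by
    rw [Finset.mul_sum]
    refine Finset.sum_congr rfl fun t ht => ?_
    rw [(Finset.mem_powersetCard.1 ht).2]
  rw [sum_powerset_nonempty_eq_sum_Icc_powersetCard, Finset.card_univ, Fintype.card_fin]
  simp only [sum_powersetCard]
  rcases k.eq_zero_or_pos with rfl | hk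
  · simp [lambdaSum]
  · rw [← Finset.insert_Icc_add_one_left_eq_Icc hk, Finset.sum_insert (by simp)]
    simp [lambdaSum, Finset.powersetCard_one]

theorem degree_lcm_eq_lambda_general {R : Type*} [CommRing R] [IsDomain R]
    [NormalizedGCDMonoid R[X]] {k : ℕ} (d : Fin k → ℕ) (hd : ∀ i, 0 < d i) :
    ((Finset.univ.lcm fun i : Fin k => (X : R[X]) ^ d i - 1).natDegree : ℤ) = lambdaSum d := by
  have hne : ∀ i ∈ Finset.univ, (X : R[X]) ^ d i - 1 ≠ 0 := fun i _ => by
    simpa only [C_1] using X_pow_sub_C_ne_zero (hd i) (1 : R)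
  rw [natDegree_lcm_eq_sum_powerset_natDegree_gcd hne, lambdaSum_eq_sum_powerset_gcd]
  simp only [natDegree_gcd_X_pow_sub_one]

/-- For positive integers `d₁, …, d_k`, the degree of `lcm(x^{d₁} - 1, …, x^{d_k} - 1)` in
`F_q[x]` equals `λ(d₁, …, d_k)`. -/
theorem degree_lcm_eq_lambda
    (F : Type*) [Field F] [Fintype F] [DecidableEq F]
    {k : ℕ} (d : Fin k → ℕ) (hd : ∀ i, 0 < d i) :
    ((Finset.univ.lcm fun i : Fin k => (X : Polynomial F) ^ (d i) - 1).natDegree : ℤ) =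
      lambdaSum d :=
  degree_lcm_eq_lambda_general d hd
end
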